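/- Assume the late-expensive-obstacles assumption holds. Then D̂ is nonempty if and only if (Σ_{i=1}^ℓ a_i) f(c̃) + (Σ_{i=1}^ℓ b_i)²/(2(Σ_{i=1}^ℓ a_i)(f(c̃) − 1/(2f(c̃)))) ≤ 1. -/

import Mathlib

open Finset

noncomputable section

/-- Membership in the domain `D` of the optimization problem. -/
def memD (ℓ : ℕ) (a b x y : ℕ → ℝ) : Prop :=
  (∀ i ∈ Finset.Icc 1 ℓ, 0 < x i ∧ 0 < y i) ∧
  (∑ i ∈ Finset.Icc 1 ℓ, (x i + y i)) ≤ 1 ∧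
  (∀ m ∈ Finset.Icc 1 ℓ,
    0 ≤ ∑ i ∈ Finset.Icc 1 m, (x i - (a i) ^ 2 / (2 * x i) - (b i) ^ 2 / (2 * y i)))

/-- Membership in the domain `D̂`: elements of `D` where the cumulative condition holds with
equality for `m = ℓ`. -/
def memDhat (ℓ : ℕ) (a b x y : ℕ → ℝ) : Prop :=
  memD ℓ a b x y ∧
  (∑ i ∈ Finset.Icc 1 ℓ, (x i - (a i) ^ 2 / (2 * x i) - (b i) ^ 2 / (2 * y i))) = 0

/-- The convention `c_0 = c_ℓ = 0`. -/
def cbar (ℓ : ℕ) (c : ℕ → ℝ) (m : ℕ) : ℝ := if m = 0 ∨ m = ℓ then 0 else c m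

/-- Membership in `D^m(c, c')`. -/
def memDm (a b : ℕ → ℝ) (N : ℝ) (m : ℕ) (c c' x y : ℝ) : Prop :=
  0 < x ∧ 0 < y ∧ x + y ≤ N ∧ c + x - (a m) ^ 2 / (2 * x) - (b m) ^ 2 / (2 * y) = c'

/-- Membership in `D̃(c_1, …, c_{ℓ-1})`. -/
def memDtilde (ℓ : ℕ) (a b : ℕ → ℝ) (N : ℝ) (c x y : ℕ → ℝ) : Prop :=
  (∑ i ∈ Finset.Icc 1 ℓ, (x i + y i)) ≤ 1 ∧
  ∀ m ∈ Finset.Icc 1 ℓ, memDm a b N m (cbar ℓ c (m - 1)) (cbar ℓ c m) (x m) (y m)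

/-- Membership in `D^c`. -/
def memDc (ℓ : ℕ) (a b : ℕ → ℝ) (N : ℝ) (c : ℕ → ℝ) : Prop :=
  (∀ m ∈ Finset.Icc 1 (ℓ - 1), 0 ≤ c m) ∧ ∃ x y, memDtilde ℓ a b N c x y

/-- `(x, y)` minimizes `x + y` over `D^m(c, c')`. -/
def isArgminDm (a b : ℕ → ℝ) (N : ℝ) (m : ℕ) (c c' x y : ℝ) : Prop :=
  memDm a b N m c c' x y ∧ ∀ x' y' : ℝ, memDm a b N m c c' x' y' → x + y ≤ x' + y'

/-- The projection `D^m_x(c, C)` of `D^m(c, C)` to the first coordinate. -/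
def Dmx (a b : ℕ → ℝ) (N : ℝ) (m : ℕ) (c C : ℝ) : Set ℝ :=
  {x : ℝ | ∃ y : ℝ, memDm a b N m c C x y}

/-- The function `f(c̃) = sqrt((1 + c̃)/2 + sqrt(c̃²/4 + c̃))`. -/
def fval (c : ℝ) : ℝ := Real.sqrt ((1 + c) / 2 + Real.sqrt (c ^ 2 / 4 + c))

/-- `c̃ = (Σ b_i)² / (2 (Σ a_i)²)`. -/
def ctilde (ℓ : ℕ) (a b : ℕ → ℝ) : ℝ :=
  (∑ i ∈ Finset.Icc 1 ℓ, b i) ^ 2 / (2 * (∑ i ∈ Finset.Icc 1 ℓ, a i) ^ 2)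

/-- The objective function `F` on `ℝ^{2ℓ}`. -/
def Fobj (ℓ : ℕ) (a b x y : ℕ → ℝ) : ℝ :=
  (1 - ∑ i ∈ Finset.Icc 1 ℓ, (x i + y i)) *
  (1 - ∑ i ∈ Finset.Icc 1 ℓ, (y i + (a i) ^ 2 / (2 * x i) + (b i) ^ 2 / (2 * y i)))

/-- The late-expensive-obstacles assumption. -/
def LateExpensive (ℓ : ℕ) (a b : ℕ → ℝ) : Prop :=
  ∀ m, 1 ≤ m → m < ℓ →
    (∑ i ∈ Finset.Icc 1 m, b i) / (∑ i ∈ Finset.Icc 1 m, a i) <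
      (∑ i ∈ Finset.Icc (m + 1) ℓ, b i) / (∑ i ∈ Finset.Icc (m + 1) ℓ, a i)

/-- The ratio `(Σ_{j=p}^q b_j) / (Σ_{j=p}^q a_j)`. -/
def ratioBA (a b : ℕ → ℝ) (p q : ℕ) : ℝ :=
  (∑ j ∈ Finset.Icc p q, b j) / (∑ j ∈ Finset.Icc p q, a j)

/-- `u` (on indices `0, …, n+1`) is an admissible division into blocks. -/
def AdmissibleDiv (ℓ : ℕ) (a b : ℕ → ℝ) (n : ℕ) (u : ℕ → ℕ) : Prop :=
  u 0 = 0 ∧ u (n + 1) = ℓ ∧ (∀ i ≤ n, u i < u (i + 1)) ∧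
  ∀ i ≤ n, ∀ m, u i < m → m < u (i + 1) →
    ratioBA a b (u i + 1) m < ratioBA a b (m + 1) (u (i + 1))

/-- The canonical admissible division into blocks: the admissible division whose index
set is the intersection of the index sets of all admissible divisions into blocks. -/
def IsCanonicalDiv (ℓ : ℕ) (a b : ℕ → ℝ) (n : ℕ) (u : ℕ → ℕ) : Prop :=
  AdmissibleDiv ℓ a b n u ∧
  ∀ k, (∃ i ≤ n + 1, u i = k) ↔
    ∀ (n' : ℕ) (u' : ℕ → ℕ), AdmissibleDiv ℓ a b n' u' → ∃ i ≤ n' + 1, u' i = k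

/-- The minimal time to cross one block with branching length `A` and obstacle length `B`. -/
def blockTime (A B : ℝ) : ℝ :=
  A * fval (B ^ 2 / (2 * A ^ 2)) +
    B ^ 2 / (2 * A * (fval (B ^ 2 / (2 * A ^ 2)) - 1 / (2 * fval (B ^ 2 / (2 * A ^ 2)))))

/-- The total optimal time `T*` associated with a division into blocks. -/
def Tstar (a b : ℕ → ℝ) (n : ℕ) (u : ℕ → ℕ) : ℝ :=
  ∑ i ∈ Finset.range (n + 1),
    blockTime (∑ j ∈ Finset.Icc (u i + 1) (u (i + 1)), a j)
      (∑ j ∈ Finset.Icc (u i + 1) (u (i + 1)), b j)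

/-- The coefficient appearing in the formula for the optimal `c_m`. -/
def coefC (ℓ : ℕ) (a b : ℕ → ℝ) (m : ℕ) : ℝ :=
  ((∑ i ∈ Finset.Icc 1 m, a i) * (∑ i ∈ Finset.Icc (m + 1) ℓ, b i) -
    (∑ i ∈ Finset.Icc 1 m, b i) * (∑ i ∈ Finset.Icc (m + 1) ℓ, a i)) /
    (∑ i ∈ Finset.Icc 1 ℓ, b i)

/-!
By Cauchy–Schwarz the surplus `x - a² / (2x) - b² / (2y)` is superadditive, so every point of `D̂`
merges into a point `(∑ xᵢ, ∑ yᵢ)` that is feasible for the single obstacle `(A, B) = (∑ aᵢ, ∑ bᵢ)`.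
For one obstacle, the minimum of `x + y` subject to a nonnegative surplus is attained at
`(A f, B k)`, where `f = f(c̃)` and `k` solve the Lagrange conditions: the surplus lies below its
tangent plane there, which is a multiple of `x + y` minus the optimal time.
Conversely, splitting the optimum proportionally as `xᵢ = aᵢ f`, `yᵢ = bᵢ k` keeps the total surplus
equal to zero, and its partial sums are nonnegative exactly when no initial ratio
`(∑_{i ≤ m} bᵢ) / (∑_{i ≤ m} aᵢ)` exceeds `B / A`.
-/

section Surplus

/-- The change of the cumulative condition in `D` caused by one obstacle with branching length `a`
and obstacle length `b` that is crossed with times `x` and `y`. -/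
def surplus (a b x y : ℝ) : ℝ := x - a ^ 2 / (2 * x) - b ^ 2 / (2 * y)

theorem sum_surplus_le_surplus_sum {ι : Type*} (s : Finset ι) (a b : ι → ℝ) {x y : ι → ℝ}
    (hx : ∀ i ∈ s, 0 < x i) (hy : ∀ i ∈ s, 0 < y i) :
    ∑ i ∈ s, surplus (a i) (b i) (x i) (y i) ≤
      surplus (∑ i ∈ s, a i) (∑ i ∈ s, b i) (∑ i ∈ s, x i) (∑ i ∈ s, y i) := by
  have ha := sq_sum_div_le_sum_sq_div s a (g := fun i ↦ 2 * x i)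
    fun i hi ↦ mul_pos two_pos (hx i hi)
  have hb := sq_sum_div_le_sum_sq_div s b (g := fun i ↦ 2 * y i)
    fun i hi ↦ mul_pos two_pos (hy i hi)
  rw [← mul_sum] at ha hb
  simp only [surplus, sum_sub_distrib]
  linarith

theorem div_sub_div_two_mul_sq_le_sq_div_two_mul (a : ℝ) {x r : ℝ} (hx : 0 < x) (hr : r ≠ 0) :
    a / r - x / (2 * r ^ 2) ≤ a ^ 2 / (2 * x) := by
  have gap : a ^ 2 / (2 * x) - (a / r - x / (2 * r ^ 2)) =
      (a * r - x) ^ 2 / (2 * x * r ^ 2) := by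
    field_simp
    ring
  have gap_nonneg : 0 ≤ (a * r - x) ^ 2 / (2 * x * r ^ 2) := by positivity
  linarith

-- The two hypotheses are the Lagrange conditions for minimizing `x + y` at `(a * f, b * k)`:
-- the surplus vanishes there, and its two partial derivatives agree.
theorem surplus_le_mul_sub {a b f k x y : ℝ} (hf : f ≠ 0) (hk : k ≠ 0)
    (hzero : b / (2 * k) = a * (f - 1 / (2 * f)))
    (hgrad : 1 / (2 * k ^ 2) = 1 + 1 / (2 * f ^ 2)) (hx : 0 < x) (hy : 0 < y) :
    surplus a b x y ≤ (1 + 1 / (2 * f ^ 2)) * (x + y - (a * f + b * k)) := by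
  have hslope : (1 + 1 / (2 * f ^ 2)) * (a * f + b * k) = a / f + b / k := by
    calc (1 + 1 / (2 * f ^ 2)) * (a * f + b * k)
        = (1 + 1 / (2 * f ^ 2)) * (a * f) + 1 / (2 * k ^ 2) * (b * k) := by rw [hgrad]; ring
      _ = a * (f - 1 / (2 * f)) + a / f + b / (2 * k) := by field_simp; ring
      _ = a / f + b / k := by rw [← hzero]; field_simp; ring
  calc surplus a b x y
      ≤ x - (a / f - x / (2 * f ^ 2)) - (b / k - y / (2 * k ^ 2)) := by
        unfold surplus
        gcongr
        exacts [div_sub_div_two_mul_sq_le_sq_div_two_mul a hx hf,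
          div_sub_div_two_mul_sq_le_sq_div_two_mul b hy hk]
    _ = (1 + 1 / (2 * f ^ 2)) * x + 1 / (2 * k ^ 2) * y - (a / f + b / k) := by ring
    _ = (1 + 1 / (2 * f ^ 2)) * (x + y - (a * f + b * k)) := by rw [hgrad, ← hslope]; ring

theorem surplus_mul_mul (a b f k : ℝ) :
    surplus a b (a * f) (b * k) = a * (f - 1 / (2 * f)) - b / (2 * k) := by
  have sq_div_mul (c r : ℝ) : c ^ 2 / (2 * (c * r)) = c / (2 * r) := by
    rw [sq, mul_left_comm]
    rcases eq_or_ne c 0 with rfl | hc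
    · simp
    · exact mul_div_mul_left _ _ hc
  rw [surplus, sq_div_mul, sq_div_mul]
  ring

theorem sum_surplus_mul_mul {ι : Type*} (s : Finset ι) (a b : ι → ℝ) (f k : ℝ) :
    ∑ i ∈ s, surplus (a i) (b i) (a i * f) (b i * k) =
      (∑ i ∈ s, a i) * (f - 1 / (2 * f)) - (∑ i ∈ s, b i) / (2 * k) := by
  simp only [surplus_mul_mul, sum_sub_distrib, sum_mul, sum_div]

end Surplus

section Fval

variable {c : ℝ}

theorem fval_sq (hc : 0 ≤ c) : fval c ^ 2 = (1 + c) / 2 + √(c ^ 2 / 4 + c) :=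
  Real.sq_sqrt (by positivity)

theorem fval_pos (hc : 0 ≤ c) : 0 < fval c :=
  Real.sqrt_pos.mpr (by positivity)

theorem sq_fval_sq_sub_half (hc : 0 ≤ c) :
    (fval c ^ 2 - 1 / 2) ^ 2 = c * (fval c ^ 2 + 1 / 2) := by
  have hsqrt : √(c ^ 2 / 4 + c) ^ 2 = c ^ 2 / 4 + c := Real.sq_sqrt (by positivity)
  rw [fval_sq hc]
  linear_combination hsqrt

theorem fval_sub_one_div_pos (hc : 0 < c) : 0 < fval c - 1 / (2 * fval c) := by
  have hf := fval_pos hc.le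
  have hsq : 1 / 2 < fval c ^ 2 := by
    rw [fval_sq hc.le]
    linarith [Real.sqrt_nonneg (c ^ 2 / 4 + c)]
  rw [sub_pos, div_lt_iff₀ (by positivity)]
  linarith

theorem sq_fval_sub_one_div (hc : 0 ≤ c) :
    (fval c - 1 / (2 * fval c)) ^ 2 = c * (1 + 1 / (2 * fval c ^ 2)) := by
  have hf := (fval_pos hc).ne'
  calc (fval c - 1 / (2 * fval c)) ^ 2
      = (fval c ^ 2 - 1 / 2) ^ 2 / fval c ^ 2 := by field_simp
    _ = c * (1 + 1 / (2 * fval c ^ 2)) := by rw [sq_fval_sq_sub_half hc]; field_simp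

end Fval

section BlockTime

variable {A B : ℝ}

/-- The optimal time spent per unit of branching length in a block with branching length `A` and
obstacle length `B`. -/
def branchRate (A B : ℝ) : ℝ := fval (B ^ 2 / (2 * A ^ 2))

/-- The optimal time spent per unit of obstacle length in a block with branching length `A` and
obstacle length `B`; it makes the surplus at the optimum vanish. -/
def obstacleRate (A B : ℝ) : ℝ := B / (2 * A * (branchRate A B - 1 / (2 * branchRate A B)))

theorem blockTime_eq_rates (A B : ℝ) :
    blockTime A B = A * branchRate A B + B * obstacleRate A B := by
  unfold blockTime obstacleRate branchRate
  ring

theorem branchRate_pos (A B : ℝ) : 0 < branchRate A B :=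
  fval_pos (by positivity)

theorem branchRate_sub_one_div_pos (hA : A ≠ 0) (hB : B ≠ 0) :
    0 < branchRate A B - 1 / (2 * branchRate A B) :=
  fval_sub_one_div_pos (by positivity)

theorem obstacleRate_pos (hA : 0 < A) (hB : 0 < B) : 0 < obstacleRate A B := by
  have := branchRate_sub_one_div_pos hA.ne' hB.ne'
  unfold obstacleRate
  positivity

theorem div_two_mul_obstacleRate (hA : A ≠ 0) (hB : B ≠ 0) :
    B / (2 * obstacleRate A B) = A * (branchRate A B - 1 / (2 * branchRate A B)) := by
  have := (branchRate_sub_one_div_pos hA hB).ne'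
  unfold obstacleRate
  generalize branchRate A B - 1 / (2 * branchRate A B) = g at *
  field_simp

theorem one_div_two_mul_obstacleRate_sq (hA : A ≠ 0) (hB : B ≠ 0) :
    1 / (2 * obstacleRate A B ^ 2) = 1 + 1 / (2 * branchRate A B ^ 2) := by
  have hsq : (branchRate A B - 1 / (2 * branchRate A B)) ^ 2 =
      B ^ 2 / (2 * A ^ 2) * (1 + 1 / (2 * branchRate A B ^ 2)) :=
    sq_fval_sub_one_div (by positivity)
  calc 1 / (2 * obstacleRate A B ^ 2)
      = 2 / B ^ 2 * (B / (2 * obstacleRate A B)) ^ 2 := by field_simp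
    _ = 2 / B ^ 2 * (A ^ 2 * (branchRate A B - 1 / (2 * branchRate A B)) ^ 2) := by
        rw [div_two_mul_obstacleRate hA hB, mul_pow]
    _ = 1 + 1 / (2 * branchRate A B ^ 2) := by rw [hsq]; field_simp

theorem blockTime_le_add_of_surplus_nonneg (hA : 0 < A) (hB : 0 < B) {x y : ℝ} (hx : 0 < x)
    (hy : 0 < y) (h : 0 ≤ surplus A B x y) : blockTime A B ≤ x + y := by
  have hbound := h.trans <| surplus_le_mul_sub (branchRate_pos A B).ne'
    (obstacleRate_pos hA hB).ne' (div_two_mul_obstacleRate hA.ne' hB.ne')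
    (one_div_two_mul_obstacleRate_sq hA.ne' hB.ne') hx hy
  rw [blockTime_eq_rates, ← sub_nonneg]
  exact nonneg_of_mul_nonneg_right hbound (by positivity)

theorem div_two_mul_obstacleRate_le (hA : 0 < A) (hB : 0 < B) {A' B' : ℝ} (hA' : 0 < A')
    (h : B' / A' ≤ B / A) :
    B' / (2 * obstacleRate A B) ≤ A' * (branchRate A B - 1 / (2 * branchRate A B)) := by
  have hk := obstacleRate_pos hA hB
  calc B' / (2 * obstacleRate A B)
      = A' * (B' / A') / (2 * obstacleRate A B) := by rw [mul_div_cancel₀ _ hA'.ne']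
    _ ≤ A' * (B / A) / (2 * obstacleRate A B) := by gcongr
    _ = A' / A * (B / (2 * obstacleRate A B)) := by ring
    _ = A' * (branchRate A B - 1 / (2 * branchRate A B)) := by
        rw [div_two_mul_obstacleRate hA.ne' hB.ne', ← mul_assoc, div_mul_cancel₀ _ hA.ne']

theorem blockTime_le_sum_add_of_sum_surplus_nonneg {ι : Type*} {s : Finset ι} {a b x y : ι → ℝ}
    (hA : 0 < ∑ i ∈ s, a i) (hB : 0 < ∑ i ∈ s, b i) (hx : ∀ i ∈ s, 0 < x i)
    (hy : ∀ i ∈ s, 0 < y i) (h : 0 ≤ ∑ i ∈ s, surplus (a i) (b i) (x i) (y i)) :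
    blockTime (∑ i ∈ s, a i) (∑ i ∈ s, b i) ≤ ∑ i ∈ s, (x i + y i) := by
  have hs : s.Nonempty := nonempty_of_sum_ne_zero hA.ne'
  rw [sum_add_distrib]
  exact blockTime_le_add_of_surplus_nonneg hA hB (sum_pos hx hs) (sum_pos hy hs)
    (h.trans (sum_surplus_le_surplus_sum s a b hx hy))

end BlockTime

section Landscape

variable {ℓ : ℕ} {a b : ℕ → ℝ}

theorem sum_Icc_pos_of_pos {p q : ℕ} (ha : ∀ i ∈ Icc 1 ℓ, 0 < a i) (hp : 1 ≤ p) (hpq : p ≤ q)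
    (hq : q ≤ ℓ) : 0 < ∑ i ∈ Icc p q, a i :=
  sum_pos (fun i hi ↦ ha i (Icc_subset_Icc hp hq hi)) (nonempty_Icc.mpr hpq)

theorem memDhat_mul_rates (hℓ : 1 ≤ ℓ) (ha : ∀ i ∈ Icc 1 ℓ, 0 < a i)
    (hb : ∀ i ∈ Icc 1 ℓ, 0 < b i) (hratio : ∀ m ∈ Icc 1 ℓ, ratioBA a b 1 m ≤ ratioBA a b 1 ℓ)
    (htime : blockTime (∑ i ∈ Icc 1 ℓ, a i) (∑ i ∈ Icc 1 ℓ, b i) ≤ 1) :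
    memDhat ℓ a b
      (fun i ↦ a i * branchRate (∑ i ∈ Icc 1 ℓ, a i) (∑ i ∈ Icc 1 ℓ, b i))
      (fun i ↦ b i * obstacleRate (∑ i ∈ Icc 1 ℓ, a i) (∑ i ∈ Icc 1 ℓ, b i)) := by
  have hA := sum_Icc_pos_of_pos ha le_rfl hℓ le_rfl
  have hB := sum_Icc_pos_of_pos hb le_rfl hℓ le_rfl
  refine ⟨⟨fun i hi ↦ ⟨mul_pos (ha i hi) (branchRate_pos _ _),
    mul_pos (hb i hi) (obstacleRate_pos hA hB)⟩, ?_, fun m hm ↦ ?_⟩, ?_⟩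
  · rwa [sum_add_distrib, ← sum_mul, ← sum_mul, ← blockTime_eq_rates]
  · obtain ⟨one_le_m, m_le⟩ := mem_Icc.mp hm
    refine (sub_nonneg.mpr ?_).trans_eq (sum_surplus_mul_mul (Icc 1 m) a b _ _).symm
    exact div_two_mul_obstacleRate_le hA hB (sum_Icc_pos_of_pos ha le_rfl one_le_m m_le)
      (hratio m hm)
  · refine (sum_surplus_mul_mul (Icc 1 ℓ) a b _ _).trans (sub_eq_zero.mpr ?_)
    exact (div_two_mul_obstacleRate hA.ne' hB.ne').symm

theorem sum_Icc_one_add_sum_Icc {M : Type*} [AddCommMonoid M] (u : ℕ → M) {m : ℕ} (hm : m ≤ ℓ) :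
    ∑ i ∈ Icc 1 m, u i + ∑ i ∈ Icc (m + 1) ℓ, u i = ∑ i ∈ Icc 1 ℓ, u i := by
  have h := sum_Ioc_consecutive u m.zero_le hm
  simpa only [← Icc_add_one_left_eq_Ioc, zero_add] using h

theorem LateExpensive.ratioBA_le (hlate : LateExpensive ℓ a b) (ha : ∀ i ∈ Icc 1 ℓ, 0 < a i)
    {m : ℕ} (hm : m ∈ Icc 1 ℓ) : ratioBA a b 1 m ≤ ratioBA a b 1 ℓ := by
  obtain ⟨one_le_m, m_le⟩ := mem_Icc.mp hm
  rcases m_le.eq_or_lt with rfl | m_lt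
  · rfl
  have hinit := sum_Icc_pos_of_pos ha le_rfl one_le_m m_le
  have htail := sum_Icc_pos_of_pos ha (Nat.le_add_left 1 m) m_lt le_rfl
  have hcross := (div_lt_div_iff₀ hinit htail).mp (hlate m one_le_m m_lt)
  rw [ratioBA, ratioBA, ← sum_Icc_one_add_sum_Icc a m_le, ← sum_Icc_one_add_sum_Icc b m_le,
    div_le_div_iff₀ hinit (add_pos hinit htail)]
  linarith

end Landscape

theorem Dhat_nonempty_iff_late_expensive_general {ℓ : ℕ} (hℓ : 1 ≤ ℓ) {a b : ℕ → ℝ}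
    (ha : ∀ i ∈ Icc 1 ℓ, 0 < a i) (hb : ∀ i ∈ Icc 1 ℓ, 0 < b i)
    (hratio : ∀ m ∈ Icc 1 ℓ, ratioBA a b 1 m ≤ ratioBA a b 1 ℓ) :
    (∃ x y : ℕ → ℝ, memDhat ℓ a b x y) ↔
      blockTime (∑ i ∈ Icc 1 ℓ, a i) (∑ i ∈ Icc 1 ℓ, b i) ≤ 1 := by
  constructor
  · rintro ⟨x, y, ⟨hpos, hsum, -⟩, hzero⟩
    have hA := sum_Icc_pos_of_pos ha le_rfl hℓ le_rfl
    have hB := sum_Icc_pos_of_pos hb le_rfl hℓ le_rfl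
    exact (blockTime_le_sum_add_of_sum_surplus_nonneg hA hB (fun i hi ↦ (hpos i hi).1)
      (fun i hi ↦ (hpos i hi).2) hzero.ge).trans hsum
  · exact fun htime ↦ ⟨_, _, memDhat_mul_rates hℓ ha hb hratio htime⟩

/-- Under the late-expensive-obstacles assumption, `D̂` is nonempty iff
`(Σ a_i) f(c̃) + (Σ b_i)²/(2 (Σ a_i)(f(c̃) − 1/(2 f(c̃)))) ≤ 1`. -/
theorem Dhat_nonempty_iff_late_expensive (ℓ : ℕ) (hℓ : 1 ≤ ℓ) (a b : ℕ → ℝ)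
    (ha : ∀ i ∈ Finset.Icc 1 ℓ, 0 < a i) (hb : ∀ i ∈ Finset.Icc 1 ℓ, 0 < b i)
    (hlate : LateExpensive ℓ a b) :
    (∃ x y : ℕ → ℝ, memDhat ℓ a b x y) ↔
      (∑ i ∈ Finset.Icc 1 ℓ, a i) * fval (ctilde ℓ a b) +
        (∑ i ∈ Finset.Icc 1 ℓ, b i) ^ 2 /
          (2 * (∑ i ∈ Finset.Icc 1 ℓ, a i) *
            (fval (ctilde ℓ a b) - 1 / (2 * fval (ctilde ℓ a b)))) ≤ 1 :=
  Dhat_nonempty_iff_late_expensive_general hℓ ha hb fun _ hm ↦ hlate.ratioBA_le ha hm
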